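/- Let r ∈ (0,1] and let f : 𝔹 → ℂ be holomorphic with f(0) = 1, and F(x) = f(x)·x for x ∈ 𝔹. Then the following are equivalent: (a) for every x ∈ B_r \ {0} the Fréchet derivative DF(x) is invertible and Re l_x([DF(x)]⁻¹(D²F(x)(x,x) + DF(x)x)) > 0 for every l_x ∈ T(x); (b) for every u ∈ X with ‖u‖ = 1 the function f_u(ζ) = ζ·f(ζu) is convex on 𝕌_r (i.e., injective holomorphic with f_u(𝕌_r) convex). -/

import Mathlib

open Metric Set

noncomputable section

/-!
On the complex line through a unit vector `u` the mapping `F(x) = f(x) x` is `F(ζu) = f_u(ζ) u`, so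
at `x = ζu` we get `DF(x)x = f_u'(ζ) x` and `D²F(x)(x,x) = ζ f_u''(ζ) x`. Hence `DF(x)⁻¹` maps
`D²F(x)(x,x) + DF(x)x` to `(1 + ζ f_u''(ζ) / f_u'(ζ)) x`, and the condition on `F` along this line
is Study's criterion `Re (1 + ζ f_u'' / f_u') > 0` for the convexity of `f_u`. Since `DF(x)` is a
rank-one perturbation of `f(x)` times the identity, it is invertible when `f(x) ≠ 0` and
`f_u'(ζ) ≠ 0`.

Both directions of Study's criterion rest on the support inequality
`⟪z₀ g'(z₀), g(z) - g(z₀)⟫ ≤ 0` for `‖z‖ ≤ ‖z₀‖`: the vector `z₀ g'(z₀)` is normal at `g(z₀)` to the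
image of the circle through `z₀`. If the criterion holds, this normal turns strictly monotonically
and exactly once around the circle, which gives the inequality. If the image is convex, the
inequality comes from Schwarz's lemma.
-/

open Filter Topology Asymptotics
open scoped Real InnerProductSpace ComplexConjugate

section FrechetHolomorphic

lemma ball_subset_ball_add_self {E : Type*} [PseudoMetricSpace E] {x y : E} {δ : ℝ}
    (hy : y ∈ ball x δ) : ball y δ ⊆ ball x (δ + δ) :=
  ball_subset_ball' (by gcongr; exact (mem_ball.1 hy).le)

variable {E F : Type*} [NormedAddCommGroup E] [NormedSpace ℂ E]
  [NormedAddCommGroup F] [NormedSpace ℂ F] {f : E → F} {x : E} {δ M : ℝ}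

lemma norm_fderiv_le_of_norm_le_on_ball (hδ : 0 < δ) (hf : DifferentiableOn ℂ f (ball x δ))
    (hM : ∀ z ∈ ball x δ, ‖f z‖ ≤ M) : ‖fderiv ℂ f x‖ ≤ 2 * M / δ := by
  refine Complex.norm_fderiv_le_div_of_mapsTo_ball hf (fun z hz => ?_) hδ
  rw [mem_closedBall, dist_eq_norm, two_mul]
  exact norm_sub_le_of_le (hM z hz) (hM x (mem_ball_self hδ))

lemma norm_sub_fderiv_le_of_norm_le_on_ball (hf : DifferentiableOn ℂ f (ball x δ))
    (hM : ∀ z ∈ ball x δ, ‖f z‖ ≤ M) {k : E} (hk : ‖k‖ < δ) :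
    ‖f (x + k) - f x - fderiv ℂ f x k‖ ≤ 4 * M * (‖k‖ / δ) ^ 2 := by
  have hδ : 0 < δ := (norm_nonneg k).trans_lt hk
  have hx : x ∈ ball x δ := mem_ball_self hδ
  set φ : E → F := fun z => f z - fderiv ℂ f x (z - x) with hφ
  have hφx : φ x = f x := by simp [hφ]
  have hmaps : MapsTo φ (ball x δ) (closedBall (φ x) (4 * M)) := fun z hz => by
    have hlin : ‖fderiv ℂ f x (z - x)‖ ≤ 2 * M := by
      calc ‖fderiv ℂ f x (z - x)‖ ≤ 2 * M / δ * δ :=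
            (fderiv ℂ f x).le_of_opNorm_le_of_le (norm_fderiv_le_of_norm_le_on_ball hδ hf hM)
              (mem_ball_iff_norm.1 hz).le
        _ = 2 * M := by field_simp
    rw [mem_closedBall, dist_eq_norm, hφx]
    linarith [norm_sub_le_of_le (norm_sub_le_of_le (hM z hz) hlin) (hM x hx)]
  have hlittle : (φ · - φ x) =o[𝓝 x] fun z => ‖z - x‖ ^ 1 := by
    have hdiff := (hf.differentiableAt (ball_mem_nhds x hδ)).hasFDerivAt.isLittleO
    simp only [pow_one, hφx]
    exact (hdiff.congr_left fun z => sub_right_comm _ _ _).norm_right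
  have hz : x + k ∈ ball x δ := by simpa [dist_eq_norm] using hk
  have hschwarz := Complex.dist_le_mul_div_pow_of_mapsTo_ball_of_isLittleO
    (hf.sub (by fun_prop)) hmaps hlittle hz
  simpa [hφ, dist_eq_norm, sub_right_comm] using hschwarz

theorem differentiableOn_of_tendstoUniformlyOn [CompleteSpace F] {ι : Type*} {l : Filter ι}
    [l.NeBot] {φ : ι → E → F} {U : Set E} (hU : IsOpen U)
    (hlim : TendstoUniformlyOn φ f l U) (hφ : ∀ᶠ i in l, DifferentiableOn ℂ (φ i) U) :
    DifferentiableOn ℂ f U := by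
  intro c hc
  obtain ⟨R, hR, hRU⟩ := Metric.isOpen_iff.1 hU c hc
  obtain ⟨ρ, hρ, rfl⟩ : ∃ ρ > 0, R = ρ + ρ := ⟨R / 2, half_pos hR, (add_halves R).symm⟩
  have hball : ∀ y ∈ ball c ρ, ball y ρ ⊆ U := fun y hy =>
    (ball_subset_ball_add_self hy).trans hRU
  have hdiff : ∀ᶠ i in l, ∀ y ∈ ball c ρ, DifferentiableAt ℂ (φ i) y :=
    hφ.mono fun i hi y hy =>
      hi.differentiableAt (mem_of_superset (ball_mem_nhds y hρ) (hball y hy))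
  have hcauchy : UniformCauchySeqOn (fun i => fderiv ℂ (φ i)) l (ball c ρ) := by
    intro V hV
    obtain ⟨ε, hε, hεV⟩ := Metric.mem_uniformity_dist.1 hV
    have hη : 0 < ρ * ε / 4 := by positivity
    filter_upwards [hlim.uniformCauchySeqOn _ (dist_mem_uniformity hη), hφ.prod_mk hφ,
      hdiff.prod_mk hdiff] with n hn hnφ hnd y hy
    refine hεV ?_
    have hle := norm_fderiv_le_of_norm_le_on_ball hρ
      ((hnφ.1.sub hnφ.2).mono (hball y hy)) fun z hz => by
        simpa [dist_eq_norm] using (hn z (hball y hy hz)).le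
    rw [fderiv_sub (hnd.1 y hy) (hnd.2 y hy), ← dist_eq_norm] at hle
    refine hle.trans_lt ?_
    have : 2 * (ρ * ε / 4) / ρ = ε / 2 := by field_simp; norm_num
    linarith
  choose! f' hf' using fun y (hy : y ∈ ball c ρ) =>
    CompleteSpace.complete (hcauchy.cauchy_map hy)
  have hderiv : HasFDerivAt f (f' c) c :=
    hasFDerivAt_of_tendstoUniformlyOnFilter
      (((hcauchy.tendstoUniformlyOn_of_tendsto hf').tendstoUniformlyOnFilter).mono_right
        (le_principal_iff.2 (ball_mem_nhds c hρ)))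
      ((hdiff.prod_mk (ball_mem_nhds c hρ)).mono fun n hn => (hn.1 n.2 hn.2).hasFDerivAt)
      (mem_of_superset (hU.mem_nhds hc) fun y hy => hlim.tendsto_at hy)
  exact hderiv.differentiableAt.differentiableWithinAt

lemma tendstoUniformlyOn_inv_smul_sub_fderiv (hδ : 0 < δ)
    (hf : DifferentiableOn ℂ f (ball x (δ + δ))) (hM : ∀ z ∈ ball x (δ + δ), ‖f z‖ ≤ M) (k : E) :
    TendstoUniformlyOn (fun (s : ℂ) y => s⁻¹ • (f (y + s • k) - f y)) (fun y => fderiv ℂ f y k)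
      (𝓝[≠] 0) (ball x δ) := by
  have hsmall : Tendsto (fun s : ℂ => ‖s • k‖) (𝓝[≠] 0) (𝓝 0) := by
    have : Continuous fun s : ℂ => ‖s • k‖ := by fun_prop
    simpa using (this.tendsto 0).mono_left nhdsWithin_le_nhds
  have hbound : Tendsto (fun s : ℂ => 4 * M * (‖k‖ / δ) ^ 2 * ‖s‖) (𝓝[≠] 0) (𝓝 0) := by
    have : Continuous fun s : ℂ => 4 * M * (‖k‖ / δ) ^ 2 * ‖s‖ := by fun_prop
    simpa using (this.tendsto 0).mono_left nhdsWithin_le_nhds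
  rw [Metric.tendstoUniformlyOn_iff]
  intro ε hε
  filter_upwards [hsmall.eventually_lt_const hδ, hbound.eventually_lt_const hε,
    self_mem_nhdsWithin] with s hs hsε hs0 y hy
  have hs0 : s ≠ 0 := hs0
  have hrem : s⁻¹ • (f (y + s • k) - f y) - fderiv ℂ f y k =
      s⁻¹ • (f (y + s • k) - f y - fderiv ℂ f y (s • k)) := by
    rw [map_smul, smul_sub, smul_sub, smul_sub, inv_smul_smul₀ hs0]
  rw [dist_comm, dist_eq_norm, hrem, norm_smul, norm_inv]
  calc ‖s‖⁻¹ * ‖f (y + s • k) - f y - fderiv ℂ f y (s • k)‖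
      ≤ ‖s‖⁻¹ * (4 * M * (‖s • k‖ / δ) ^ 2) := by
        gcongr
        exact norm_sub_fderiv_le_of_norm_le_on_ball
          (hf.mono (ball_subset_ball_add_self hy))
          (fun z hz => hM z (ball_subset_ball_add_self hy hz)) hs
    _ = 4 * M * (‖k‖ / δ) ^ 2 * ‖s‖ := by
        rw [norm_smul]
        field_simp [norm_ne_zero_iff.2 hs0]
    _ < ε := hsε

lemma differentiableOn_add_const_of_ball (hf : DifferentiableOn ℂ f (ball x (δ + δ))) {k : E}
    (hk : ‖k‖ < δ) : DifferentiableOn ℂ (fun y => f (y + k)) (ball x δ) := by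
  refine hf.comp (by fun_prop) fun y hy => ?_
  rw [mem_ball_iff_norm] at hy ⊢
  rw [add_sub_right_comm]
  exact (norm_add_le _ _).trans_lt (add_lt_add hy hk)

lemma differentiableOn_fderiv_apply_of_norm_le_on_ball [CompleteSpace F] (hδ : 0 < δ)
    (hf : DifferentiableOn ℂ f (ball x (δ + δ))) (hM : ∀ z ∈ ball x (δ + δ), ‖f z‖ ≤ M) (k : E) :
    DifferentiableOn ℂ (fun y => fderiv ℂ f y k) (ball x δ) := by
  have hsmall : ∀ᶠ s : ℂ in 𝓝[≠] 0, ‖s • k‖ < δ := by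
    have : Continuous fun s : ℂ => ‖s • k‖ := by fun_prop
    exact ((this.tendsto' 0 0 (by simp)).mono_left nhdsWithin_le_nhds).eventually_lt_const hδ
  refine differentiableOn_of_tendstoUniformlyOn isOpen_ball
    (tendstoUniformlyOn_inv_smul_sub_fderiv hδ hf hM k) (hsmall.mono fun s hs => ?_)
  exact ((differentiableOn_add_const_of_ball hf hs).sub
    (hf.mono (ball_subset_ball (by linarith)))).const_smul s⁻¹

lemma norm_fderiv_le_of_norm_le_on_ball_add_self (hf : DifferentiableOn ℂ f (ball x (δ + δ)))
    (hM : ∀ z ∈ ball x (δ + δ), ‖f z‖ ≤ M) {y : E} (hy : y ∈ ball x δ) :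
    ‖fderiv ℂ f y‖ ≤ 2 * M / δ :=
  norm_fderiv_le_of_norm_le_on_ball (pos_of_mem_ball hy) (hf.mono (ball_subset_ball_add_self hy))
    fun z hz => hM z (ball_subset_ball_add_self hy hz)

lemma norm_fderiv_sub_fderiv_fderiv_apply_le [CompleteSpace F]
    (hf : DifferentiableOn ℂ f (ball x (δ + δ))) (hM : ∀ z ∈ ball x (δ + δ), ‖f z‖ ≤ M)
    {k : E} (hk : ‖k‖ < δ) :
    ‖fderiv ℂ f (x + k) - fderiv ℂ f x - fderiv ℂ (fun y => fderiv ℂ f y k) x‖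
      ≤ 8 * M / δ ^ 3 * ‖k‖ ^ 2 := by
  have hδ : 0 < δ := (norm_nonneg k).trans_lt hk
  have hx : ball x δ ∈ 𝓝 x := ball_mem_nhds x hδ
  have hshift := differentiableOn_add_const_of_ball hf hk
  have hf' := hf.mono (ball_subset_ball (by linarith : δ ≤ δ + δ))
  have happly := differentiableOn_fderiv_apply_of_norm_le_on_ball hδ hf hM k
  -- The error is the derivative at `x` of the first-order Taylor remainder
  -- `y ↦ f (y + k) - f y - f' y k`, which is `O(‖k‖²)` uniformly in `y`.
  have hle := norm_fderiv_le_of_norm_le_on_ball hδ ((hshift.sub hf').sub happly)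
    fun y hy => norm_sub_fderiv_le_of_norm_le_on_ball (hf.mono (ball_subset_ball_add_self hy))
      (fun z hz => hM z (ball_subset_ball_add_self hy hz)) hk
  rw [fderiv_sub ((hshift.sub hf').differentiableAt hx) (happly.differentiableAt hx),
    fderiv_sub (hshift.differentiableAt hx) (hf'.differentiableAt hx),
    fderiv_comp_add_right] at hle
  refine hle.trans_eq ?_
  field_simp
  ring

lemma differentiableAt_fderiv_of_norm_le_on_ball [CompleteSpace F] (hδ : 0 < δ)
    (hf : DifferentiableOn ℂ f (ball x (δ + δ))) (hM : ∀ z ∈ ball x (δ + δ), ‖f z‖ ≤ M) :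
    DifferentiableAt ℂ (fderiv ℂ f) x := by
  have happly : ∀ k, DifferentiableOn ℂ (fun y => fderiv ℂ f y k) (ball x δ) :=
    differentiableOn_fderiv_apply_of_norm_le_on_ball hδ hf hM
  have happlyAt : ∀ k, DifferentiableAt ℂ (fun y => fderiv ℂ f y k) x := fun k =>
    (happly k).differentiableAt (ball_mem_nhds x hδ)
  let B : E →ₗ[ℂ] E →L[ℂ] F :=
    { toFun := fun k => fderiv ℂ (fun y => fderiv ℂ f y k) x
      map_add' := fun k₁ k₂ => by
        simp only [map_add]
        exact fderiv_fun_add (happlyAt k₁) (happlyAt k₂)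
      map_smul' := fun c k => by
        simp only [map_smul]
        exact fderiv_fun_const_smul (happlyAt k) c }
  have hB : ∀ k, ‖B k‖ ≤ 2 * (2 * M / δ) / δ * ‖k‖ := fun k => by
    refine (norm_fderiv_le_of_norm_le_on_ball hδ (happly k) fun y hy =>
      (fderiv ℂ f y).le_of_opNorm_le
        (norm_fderiv_le_of_norm_le_on_ball_add_self hf hM hy) k).trans_eq ?_
    ring
  refine HasFDerivAt.differentiableAt (f' := B.mkContinuous _ hB)
    (hasFDerivAt_iff_isLittleO_nhds_zero.2 (IsBigO.trans_isLittleO (g := fun k : E => ‖k‖ ^ 2) ?_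
      (isLittleO_norm_pow_id one_lt_two)))
  refine IsBigO.of_bound (8 * M / δ ^ 3) ?_
  filter_upwards [ball_mem_nhds (0 : E) hδ] with k hk
  simpa [B] using norm_fderiv_sub_fderiv_fderiv_apply_le hf hM (mem_ball_zero_iff.1 hk)

theorem differentiableOn_fderiv [CompleteSpace F] {U : Set E} (hU : IsOpen U)
    (hf : DifferentiableOn ℂ f U) : DifferentiableOn ℂ (fderiv ℂ f) U := by
  intro x hx
  have hbdd : ∀ᶠ z in 𝓝 x, z ∈ U ∧ ‖f z‖ < ‖f x‖ + 1 :=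
    (hU.eventually_mem hx).and
      ((hf.differentiableAt (hU.mem_nhds hx)).continuousAt.norm.eventually_lt_const
        (lt_add_one _))
  obtain ⟨R, hR, hball⟩ := Metric.eventually_nhds_iff_ball.1 hbdd
  rw [← add_halves R] at hball
  exact (differentiableAt_fderiv_of_norm_le_on_ball (half_pos hR)
    (hf.mono fun z hz => (hball z hz).1) fun z hz => (hball z hz).2.le).differentiableWithinAt

end FrechetHolomorphic

section LocalInverse

variable {g k : ℂ → ℂ} {z : ℂ}

lemma map_nhds_eq_of_eventually_leftInverse (hg : AnalyticAt ℂ g z)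
    (hk : ∀ᶠ w in 𝓝 z, k (g w) = w) : map g (𝓝 z) = 𝓝 (g z) := by
  refine le_antisymm hg.continuousAt (hg.eventually_constant_or_nhds_le_map_nhds.resolve_left ?_)
  intro hconst
  have hz : ∀ᶠ w in 𝓝[≠] z, w = z := by
    filter_upwards [hk.filter_mono nhdsWithin_le_nhds, hconst.filter_mono nhdsWithin_le_nhds]
      with w hkw hgw
    rw [← hkw, hgw, hk.self_of_nhds]
  obtain ⟨w, hwz, hw⟩ := (hz.and self_mem_nhdsWithin).exists
  exact hw hwz

lemma eventually_rightInverse_of_eventually_leftInverse (hg : AnalyticAt ℂ g z)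
    (hk : ∀ᶠ w in 𝓝 z, k (g w) = w) : ∀ᶠ y in 𝓝 (g z), g (k y) = y := by
  rw [← map_nhds_eq_of_eventually_leftInverse hg hk, eventually_map]
  exact hk.mono fun w hw => congrArg g hw

lemma continuousAt_of_eventually_leftInverse (hg : AnalyticAt ℂ g z)
    (hk : ∀ᶠ w in 𝓝 z, k (g w) = w) : ContinuousAt k (g z) := by
  rw [ContinuousAt, ← map_nhds_eq_of_eventually_leftInverse hg hk, hk.self_of_nhds,
    tendsto_map'_iff]
  exact tendsto_id.congr' (hk.mono fun w hw => hw.symm)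

lemma eventually_deriv_ne_zero_of_eventually_leftInverse (hg : AnalyticAt ℂ g z)
    (hk : ∀ᶠ w in 𝓝 z, k (g w) = w) : ∀ᶠ w in 𝓝[≠] z, deriv g w ≠ 0 := by
  refine hg.deriv.eventually_eq_zero_or_eventually_ne_zero.resolve_left fun hzero => ?_
  obtain ⟨ε, hε, hball⟩ := Metric.eventually_nhds_iff_ball.1
    (hzero.and (hg.eventually_analyticAt.and hk))
  have hz : z ∈ ball z ε := mem_ball_self hε
  have hconst : ∀ w ∈ ball z ε, g w = g z := fun w hw =>
    isOpen_ball.is_const_of_deriv_eq_zero (convex_ball z ε).isPreconnected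
      (fun v hv => (hball v hv).2.1.differentiableAt.differentiableWithinAt)
      (fun v hv => (hball v hv).1) hw hz
  have hsub : ∀ w ∈ ball z ε, w = z := fun w hw => by
    rw [← (hball w hw).2.2, hconst w hw, (hball z hz).2.2]
  obtain ⟨w, hw, hwz⟩ := (Filter.Eventually.and
    (nhdsWithin_le_nhds (ball_mem_nhds z hε)) (self_mem_nhdsWithin (s := {z}ᶜ))).exists
  exact hwz (hsub w hw)

lemma hasDerivAt_of_eventually_leftInverse_of_deriv_ne_zero (hg : AnalyticAt ℂ g z)
    (hk : ∀ᶠ w in 𝓝 z, k (g w) = w) (hz : deriv g z ≠ 0) :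
    HasDerivAt k (deriv g z)⁻¹ (g z) := by
  refine HasDerivAt.of_local_left_inverse (continuousAt_of_eventually_leftInverse hg hk) ?_ hz
    (eventually_rightInverse_of_eventually_leftInverse hg hk)
  rw [hk.self_of_nhds]
  exact hg.differentiableAt.hasDerivAt

theorem analyticAt_of_eventually_leftInverse (hg : AnalyticAt ℂ g z)
    (hk : ∀ᶠ w in 𝓝 z, k (g w) = w) : AnalyticAt ℂ k (g z) := by
  refine Complex.analyticAt_of_differentiable_on_punctured_nhds_of_continuousAt ?_
    (continuousAt_of_eventually_leftInverse hg hk)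
  rw [eventually_nhdsWithin_iff, ← map_nhds_eq_of_eventually_leftInverse hg hk, eventually_map]
  have hne := eventually_deriv_ne_zero_of_eventually_leftInverse hg hk
  rw [eventually_nhdsWithin_iff] at hne
  filter_upwards [hne, hg.eventually_analyticAt, hk.eventually_nhds] with w hw hgw hkw hgwz
  have hwz : w ≠ z := fun h => hgwz (congrArg g h)
  exact (hasDerivAt_of_eventually_leftInverse_of_deriv_ne_zero hgw hkw (hw hwz)).differentiableAt

theorem deriv_ne_zero_of_eventually_leftInverse (hg : AnalyticAt ℂ g z)
    (hk : ∀ᶠ w in 𝓝 z, k (g w) = w) : deriv g z ≠ 0 := by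
  have hcomp : HasDerivAt (k ∘ g) (deriv k (g z) * deriv g z) z :=
    (analyticAt_of_eventually_leftInverse hg hk).differentiableAt.hasDerivAt.comp z
      hg.differentiableAt.hasDerivAt
  have hone : deriv k (g z) * deriv g z = 1 :=
    hcomp.unique ((hasDerivAt_id z).congr_of_eventuallyEq hk)
  exact right_ne_zero_of_mul (hone ▸ one_ne_zero)

theorem deriv_ne_zero_of_injOn {U : Set ℂ} (hU : IsOpen U) (hg : DifferentiableOn ℂ g U)
    (hinj : InjOn g U) (hz : z ∈ U) : deriv g z ≠ 0 :=
  deriv_ne_zero_of_eventually_leftInverse (k := Function.invFunOn g U)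
    (hg.analyticAt (hU.mem_nhds hz))
    (mem_of_superset (hU.mem_nhds hz) fun _ hw => hinj.leftInvOn_invFunOn hw)

lemma differentiableOn_invFunOn {U : Set ℂ} (hU : IsOpen U) (hg : DifferentiableOn ℂ g U)
    (hinj : InjOn g U) : DifferentiableOn ℂ (Function.invFunOn g U) (g '' U) := by
  rintro _ ⟨z, hz, rfl⟩
  exact (analyticAt_of_eventually_leftInverse (hg.analyticAt (hU.mem_nhds hz))
    (mem_of_superset (hU.mem_nhds hz) fun _ hw =>
      hinj.leftInvOn_invFunOn hw)).differentiableAt.differentiableWithinAt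

end LocalInverse

section OpenMapping

lemma isOpen_image_of_deriv_ne_zero {g : ℂ → ℂ} {U : Set ℂ} (hU : IsOpen U)
    (hg : DifferentiableOn ℂ g U) (hne : ∀ z ∈ U, deriv g z ≠ 0) : IsOpen (g '' U) := by
  rw [isOpen_iff_mem_nhds, forall_mem_image]
  intro z hz
  have hstrict := (hg.analyticAt (hU.mem_nhds hz)).hasStrictDerivAt
  rw [← hstrict.map_nhds_eq (hne z hz)]
  exact image_mem_map (hU.mem_nhds hz)

lemma re_pos_of_re_nonneg_of_isOpen_image {p : ℂ → ℂ} {U : Set ℂ} (hopen : IsOpen (p '' U))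
    (hnonneg : ∀ z ∈ U, 0 ≤ (p z).re) : ∀ z ∈ U, 0 < (p z).re := by
  have hsub : p '' U ⊆ interior {w : ℂ | 0 ≤ w.re} :=
    interior_maximal (image_subset_iff.2 hnonneg) hopen
  rw [Complex.interior_setOfPred_le_re] at hsub
  exact fun z hz => hsub (mem_image_of_mem p hz)

theorem re_pos_of_re_nonneg_of_exists_re_pos {p : ℂ → ℂ} {U : Set ℂ} (hU : IsOpen U)
    (hUc : IsPreconnected U) (hp : DifferentiableOn ℂ p U) (hnonneg : ∀ z ∈ U, 0 ≤ (p z).re)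
    (hpos : ∃ z ∈ U, 0 < (p z).re) : ∀ z ∈ U, 0 < (p z).re := by
  obtain ⟨z₀, hz₀, hpz₀⟩ := hpos
  rcases (hp.analyticOnNhd hU).is_constant_or_isOpen hUc with ⟨w, hw⟩ | hopen
  · intro z hz
    rwa [hw z hz, ← hw z₀ hz₀]
  · exact re_pos_of_re_nonneg_of_isOpen_image (hopen U Subset.rfl hU) hnonneg

end OpenMapping

section RealCurves

lemma eq_mul_exp_integral_of_hasDerivAt {n p : ℝ → ℂ} (hp : Continuous p)
    (hn : ∀ t, HasDerivAt n (p t * n t) t) (a t : ℝ) :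
    n t = n a * Complex.exp (∫ s in a..t, p s) := by
  have hconst : ∀ t, HasDerivAt (fun t => n t * Complex.exp (-∫ s in a..t, p s)) 0 t := fun t => by
    have hint : HasDerivAt (fun t => ∫ s in a..t, p s) (p t) t :=
      (hp.integral_hasStrictDerivAt a t).hasDerivAt
    refine ((hn t).mul hint.neg.cexp).congr_deriv ?_
    ring
  have heq := is_const_of_deriv_eq_zero (fun t => (hconst t).differentiableAt)
    (fun t => (hconst t).deriv) t a
  simp only [intervalIntegral.integral_same, neg_zero, Complex.exp_zero, mul_one] at heq
  rw [← heq, mul_assoc, ← Complex.exp_add, neg_add_cancel, Complex.exp_zero, mul_one]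

lemma neg_of_hasDerivAt_neg_mul_sin {G ρ ψ : ℝ → ℝ} {a b t : ℝ}
    (hG : ∀ s, HasDerivAt G (-(ρ s * Real.sin (ψ s))) s) (hρ : ∀ s, 0 < ρ s)
    (hψ : StrictMono ψ) (hψa : ψ a = 0) (hψb : ψ b = 2 * π) (hGa : G a = 0) (hGb : G b = 0)
    (hat : a < t) (htb : t < b) : G t < 0 := by
  have hcont : Continuous G := continuous_iff_continuousAt.2 fun s => (hG s).continuousAt
  rcases le_total (ψ t) π with hπ | hπ
  · rw [← hGa]
    refine strictAntiOn_of_deriv_neg (convex_Icc a t) hcont.continuousOn (fun s hs => ?_)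
      (left_mem_Icc.2 hat.le) (right_mem_Icc.2 hat.le) hat
    rw [interior_Icc] at hs
    rw [(hG s).deriv, neg_lt_zero]
    exact mul_pos (hρ s) (Real.sin_pos_of_pos_of_lt_pi (hψa ▸ hψ hs.1) ((hψ hs.2).trans_le hπ))
  · rw [← hGb]
    refine strictMonoOn_of_deriv_pos (convex_Icc t b) hcont.continuousOn (fun s hs => ?_)
      (left_mem_Icc.2 htb.le) (right_mem_Icc.2 htb.le) htb
    rw [interior_Icc] at hs
    have hsin : Real.sin (ψ s) < 0 := by
      rw [← Real.sin_sub_two_pi]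
      exact Real.sin_neg_of_neg_of_neg_pi_lt (by linarith [hψ hs.2]) (by linarith [hψ hs.1])
    rw [(hG s).deriv, Left.neg_pos_iff]
    exact mul_neg_of_pos_of_neg (hρ s) hsin

variable {E : Type*} [NormedAddCommGroup E] [InnerProductSpace ℝ E] {c γ : ℝ → E} {u v : E} {a : ℝ}

lemma inner_nonpos_of_hasDerivAt_of_norm_le (hc : HasDerivAt c v a)
    (hle : ∀ᶠ t in 𝓝[>] a, ‖c t‖ ≤ ‖c a‖) : ⟪c a, v⟫_ℝ ≤ 0 := by
  have hlim := (hasDerivAt_iff_tendsto_slope.1 hc.norm_sq).mono_left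
    (nhdsGT_le_nhdsNE a)
  have hslope : ∀ᶠ t in 𝓝[>] a, slope (fun t => ‖c t‖ ^ 2) a t ≤ 0 := by
    filter_upwards [hle, self_mem_nhdsWithin] with t ht hat
    rw [slope_def_field]
    exact div_nonpos_of_nonpos_of_nonneg (sub_nonpos.2 (by gcongr)) (sub_nonneg.2 (le_of_lt hat))
  linarith [le_of_tendsto hlim hslope]

lemma inner_nonneg_of_hasDerivAt_of_inner_sub_nonneg (hc : HasDerivAt c u a)
    (hγ : HasDerivAt γ v a) (hmono : ∀ t, 0 ≤ ⟪c t - c a, γ t - γ a⟫_ℝ) : 0 ≤ ⟪u, v⟫_ℝ := by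
  refine ge_of_tendsto' ((hasDerivAt_iff_tendsto_slope.1 hc).inner
    (hasDerivAt_iff_tendsto_slope.1 hγ)) fun t => ?_
  rw [slope_def_module, slope_def_module, real_inner_smul_left, real_inner_smul_right,
    ← mul_assoc]
  exact mul_nonneg (mul_self_nonneg _) (hmono t)

end RealCurves

/-- The quantity `1 + z g''(z) / g'(z)` whose positive real part characterises convex univalent
functions. It is the logarithmic derivative along circles of the normal vector `z g'(z)` to the
image curve; where `g' z = 0` it takes the junk value `1`. -/
def convexityRatio (g : ℂ → ℂ) (z : ℂ) : ℂ :=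
  1 + z * deriv (deriv g) z / deriv g z

section Study

variable {g : ℂ → ℂ} {r : ℝ} {z z₀ : ℂ}

lemma hasDerivAt_mul_deriv (hg : AnalyticAt ℂ g z) (hz : deriv g z ≠ 0) :
    HasDerivAt (fun w => w * deriv g w) (deriv g z * convexityRatio g z) z := by
  refine ((hasDerivAt_id z).mul hg.deriv.differentiableAt.hasDerivAt).congr_deriv ?_
  simp only [convexityRatio, id]
  field_simp

lemma differentiableOn_convexityRatio {U : Set ℂ} (hU : IsOpen U) (hg : DifferentiableOn ℂ g U)
    (hne : ∀ z ∈ U, deriv g z ≠ 0) : DifferentiableOn ℂ (convexityRatio g) U :=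
  ((differentiableOn_id.mul ((hg.deriv hU).deriv hU)).div (hg.deriv hU) hne).const_add 1

lemma hasDerivAt_comp_circleMap {q : ℂ → ℂ} {R t : ℝ} {q' : ℂ}
    (hq : HasDerivAt q q' (circleMap 0 R t)) :
    HasDerivAt (fun t => q (circleMap 0 R t)) (Complex.I * (circleMap 0 R t * q')) t := by
  refine (hq.comp t (hasDerivAt_circleMap 0 R t)).congr_deriv ?_
  ring

lemma circleMap_zero_mem_ball {R : ℝ} (hR₀ : 0 ≤ R) (hR : R < r) (t : ℝ) :
    circleMap 0 R t ∈ ball (0 : ℂ) r := by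
  simpa [abs_of_nonneg hR₀] using hR

lemma circleMap_norm_arg (z : ℂ) : circleMap 0 ‖z‖ z.arg = z := by
  rw [circleMap, zero_add, Complex.norm_mul_exp_arg_mul_I]

lemma integral_circleMap_eq {p : ℂ → ℂ} (hp : DifferentiableOn ℂ p (ball 0 r)) {R : ℝ}
    (hR₀ : 0 ≤ R) (hR : R < r) (a : ℝ) :
    ∫ t in a..a + 2 * π, p (circleMap 0 R t) = 2 * π * p 0 := by
  have hper : Function.Periodic (fun t => p (circleMap 0 R t)) (2 * π) :=
    (periodic_circleMap 0 R).comp p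
  have hdiff : DiffContOnCl ℂ p (ball 0 |R|) := by
    refine (hp.mono ?_).diffContOnCl
    rw [abs_of_nonneg hR₀]
    exact closure_ball_subset_closedBall.trans (closedBall_subset_ball hR)
  have hmean := hdiff.circleAverage
  rw [Real.circleAverage_def, inv_smul_eq_iff₀ (by positivity)] at hmean
  rw [hper.intervalIntegral_add_eq a 0, zero_add, hmean]
  simp

lemma real_inner_mul_self_right (w c : ℂ) : ⟪w, w * c⟫_ℝ = ‖w‖ ^ 2 * c.re := by
  rw [Complex.inner, mul_right_comm, Complex.mul_conj, Complex.re_ofReal_mul,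
    Complex.normSq_eq_norm_sq]

lemma real_inner_mul_mul_right (a b c : ℂ) : ⟪a * c, b * c⟫_ℝ = ‖c‖ ^ 2 * ⟪a, b⟫_ℝ := by
  rw [Complex.inner, Complex.inner, map_mul, mul_mul_mul_comm, Complex.mul_conj, mul_comm,
    Complex.re_ofReal_mul, Complex.normSq_eq_norm_sq]

lemma strictMono_integral_of_pos {p : ℝ → ℝ} (hp : Continuous p) (hpos : ∀ t, 0 < p t) (a : ℝ) :
    StrictMono fun t => ∫ s in a..t, p s :=
  strictMono_of_hasDerivAt_pos (fun t => (hp.integral_hasStrictDerivAt a t).hasDerivAt) hpos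

lemma continuous_convexityRatio_circleMap (hg : DifferentiableOn ℂ g (ball 0 r))
    (hne : ∀ z ∈ ball 0 r, deriv g z ≠ 0) {R : ℝ} (hR₀ : 0 ≤ R) (hR : R < r) :
    Continuous fun t => convexityRatio g (circleMap 0 R t) :=
  (differentiableOn_convexityRatio isOpen_ball hg hne).continuousOn.comp_continuous
    (continuous_circleMap 0 R) (circleMap_zero_mem_ball hR₀ hR)

lemma circleMap_mul_deriv_eq_mul_exp_integral (hg : DifferentiableOn ℂ g (ball 0 r))
    (hne : ∀ z ∈ ball 0 r, deriv g z ≠ 0) {R : ℝ} (hR₀ : 0 ≤ R) (hR : R < r) (a t : ℝ) :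
    circleMap 0 R t * deriv g (circleMap 0 R t) = circleMap 0 R a * deriv g (circleMap 0 R a) *
      Complex.exp (Complex.I * ∫ s in a..t, convexityRatio g (circleMap 0 R s)) := by
  have hmem := circleMap_zero_mem_ball hR₀ hR
  rw [← intervalIntegral.integral_const_mul]
  refine eq_mul_exp_integral_of_hasDerivAt (n := fun t => circleMap 0 R t * deriv g _)
    (p := fun t => Complex.I * convexityRatio g _)
    (continuous_const.mul (continuous_convexityRatio_circleMap hg hne hR₀ hR)) (fun s => ?_) a t
  refine (hasDerivAt_comp_circleMap (hasDerivAt_mul_deriv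
    (hg.analyticAt (isOpen_ball.mem_nhds (hmem s))) (hne _ (hmem s)))).congr_deriv ?_
  ring

lemma inner_mul_deriv_sub_circleMap_neg (hg : DifferentiableOn ℂ g (ball 0 r))
    (hne : ∀ z ∈ ball 0 r, deriv g z ≠ 0) (hpos : ∀ z ∈ ball 0 r, 0 < (convexityRatio g z).re)
    {R : ℝ} (hR₀ : 0 < R) (hR : R < r) {a t : ℝ} (hat : a < t) (hta : t < a + 2 * π) :
    ⟪circleMap 0 R a * deriv g (circleMap 0 R a),
      g (circleMap 0 R t) - g (circleMap 0 R a)⟫_ℝ < 0 := by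
  set n₀ : ℂ := circleMap 0 R a * deriv g (circleMap 0 R a) with hn₀
  set P : ℝ → ℂ := fun t => ∫ s in a..t, convexityRatio g (circleMap 0 R s) with hP
  set G : ℝ → ℝ := fun t => ⟪n₀, g (circleMap 0 R t) - g (circleMap 0 R a)⟫_ℝ with hG
  have hmem := circleMap_zero_mem_ball hR₀.le hR
  have hcont := continuous_convexityRatio_circleMap hg hne hR₀.le hR
  have hreP : (fun t => (P t).re) = fun t => ∫ s in a..t, (convexityRatio g (circleMap 0 R s)).re :=
    funext fun t => (Complex.reCLM.intervalIntegral_comp_comm (hcont.intervalIntegrable a t)).symm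
  have hmono : StrictMono fun t => (P t).re := hreP ▸
    strictMono_integral_of_pos (Complex.continuous_re.comp hcont) (fun t => hpos _ (hmem t)) a
  have hperiod : (P (a + 2 * π)).re = 2 * π := by
    simp only [hP]
    rw [integral_circleMap_eq (differentiableOn_convexityRatio isOpen_ball hg hne) hR₀.le hR]
    simp [convexityRatio]
  have hderiv : ∀ t, HasDerivAt G
      (-(‖n₀‖ ^ 2 * Real.exp (-(P t).im) * Real.sin (P t).re)) t := fun t => by
    have hγ := hasDerivAt_comp_circleMap
      (hg.analyticAt (isOpen_ball.mem_nhds (hmem t))).differentiableAt.hasDerivAt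
    refine ((hasDerivAt_const t n₀).inner ℝ (hγ.sub_const (g (circleMap 0 R a)))).congr_deriv ?_
    rw [circleMap_mul_deriv_eq_mul_exp_integral hg hne hR₀.le hR a t, ← hn₀, inner_zero_left,
      add_zero, mul_left_comm, real_inner_mul_self_right]
    simp [Complex.exp_re, Complex.exp_im, mul_assoc, hP]
  have hn₀_ne : n₀ ≠ 0 := mul_ne_zero (circleMap_ne_center hR₀.ne') (hne _ (hmem a))
  exact neg_of_hasDerivAt_neg_mul_sin (G := G) (ψ := fun t => (P t).re) hderiv
    (fun t => by positivity) hmono (by simp [hP]) hperiod (by simp [hG])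
    (by simp [hG, periodic_circleMap 0 R a]) hat hta

theorem inner_mul_deriv_sub_neg_of_norm_eq (hg : DifferentiableOn ℂ g (ball 0 r))
    (hne : ∀ z ∈ ball 0 r, deriv g z ≠ 0) (hpos : ∀ z ∈ ball 0 r, 0 < (convexityRatio g z).re)
    (hz₀ : z₀ ∈ ball 0 r) (hz : ‖z‖ = ‖z₀‖) (hzz₀ : z ≠ z₀) :
    ⟪z₀ * deriv g z₀, g z - g z₀⟫_ℝ < 0 := by
  have hR : 0 < ‖z₀‖ := by
    refine norm_pos_iff.2 fun h => hzz₀ ?_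
    rw [h, norm_zero, norm_eq_zero] at hz
    rw [hz, h]
  obtain ⟨t, ⟨hat, hta⟩, ht⟩ :=
    (periodic_circleMap 0 ‖z₀‖).exists_mem_Ioc Real.two_pi_pos z.arg z₀.arg
  rw [← hz, circleMap_norm_arg, hz] at ht
  have hne_end : t ≠ z₀.arg + 2 * π := fun h => hzz₀ (by
    rw [ht, h, periodic_circleMap, circleMap_norm_arg])
  have hneg := inner_mul_deriv_sub_circleMap_neg hg hne hpos hR (mem_ball_zero_iff.1 hz₀) hat
    (hta.lt_of_ne hne_end)
  rwa [← ht, circleMap_norm_arg] at hneg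

theorem inner_mul_deriv_sub_neg_of_norm_le (hg : DifferentiableOn ℂ g (ball 0 r))
    (hne : ∀ z ∈ ball 0 r, deriv g z ≠ 0) (hpos : ∀ z ∈ ball 0 r, 0 < (convexityRatio g z).re)
    (hz₀ : z₀ ∈ ball 0 r) (hz : ‖z‖ ≤ ‖z₀‖) (hzz₀ : z ≠ z₀) :
    ⟪z₀ * deriv g z₀, g z - g z₀⟫_ℝ < 0 := by
  rcases hz.eq_or_lt with hz | hz
  · exact inner_mul_deriv_sub_neg_of_norm_eq hg hne hpos hz₀ hz hzz₀
  have hz₀_ne : z₀ ≠ 0 := norm_pos_iff.1 ((norm_nonneg z).trans_lt hz)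
  set h : ℂ → ℂ := fun w => (g w - g z₀) * conj (z₀ * deriv g z₀) with hh
  have hsub : closedBall (0 : ℂ) ‖z₀‖ ⊆ ball 0 r := closedBall_subset_ball (mem_ball_zero_iff.1 hz₀)
  have hhdiff : DifferentiableOn ℂ h (ball 0 r) := (hg.sub_const _).mul_const _
  have hsphere : ∀ w ∈ sphere (0 : ℂ) ‖z₀‖, ‖Complex.exp (h w)‖ ≤ 1 := fun w hw => by
    rw [Complex.norm_exp, Real.exp_le_one_iff, hh, ← Complex.inner]
    rcases eq_or_ne w z₀ with rfl | hwz₀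
    · simp
    · exact (inner_mul_deriv_sub_neg_of_norm_eq hg hne hpos hz₀ (mem_sphere_zero_iff_norm.1 hw)
        hwz₀).le
  have hnonneg : ∀ w ∈ ball (0 : ℂ) ‖z₀‖, 0 ≤ (-h w).re := fun w hw => by
    have hle := Complex.norm_le_of_forall_mem_frontier_norm_le isBounded_ball
      ((hhdiff.mono (closure_ball_subset_closedBall.trans hsub)).cexp.diffContOnCl)
      (fun w hw => hsphere w (frontier_ball_subset_sphere hw)) (subset_closure hw)
    rw [Complex.norm_exp, Real.exp_le_one_iff] at hle
    simpa using hle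
  have hopen : IsOpen ((fun w => -h w) '' ball 0 ‖z₀‖) := by
    refine isOpen_image_of_deriv_ne_zero isOpen_ball
      (hhdiff.neg.mono (ball_subset_closedBall.trans hsub)) fun w hw => ?_
    have hw := hsub (ball_subset_closedBall hw)
    simp [hh, hne w hw, hne z₀ hz₀, hz₀_ne]
  have hlt := re_pos_of_re_nonneg_of_isOpen_image hopen hnonneg z (mem_ball_zero_iff.2 hz)
  rwa [Complex.neg_re, neg_pos, hh, ← Complex.inner] at hlt

theorem injOn_of_convexityRatio_re_pos (hg : DifferentiableOn ℂ g (ball 0 r))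
    (hne : ∀ z ∈ ball 0 r, deriv g z ≠ 0) (hpos : ∀ z ∈ ball 0 r, 0 < (convexityRatio g z).re) :
    InjOn g (ball 0 r) := by
  intro z hz w hw hzw
  by_contra hne_zw
  wlog hle : ‖z‖ ≤ ‖w‖ generalizing z w
  · exact this hw hz hzw.symm (Ne.symm hne_zw) (le_of_not_ge hle)
  have hneg := inner_mul_deriv_sub_neg_of_norm_le hg hne hpos hw hle hne_zw
  rw [hzw, sub_self, inner_zero_right] at hneg
  exact hneg.false

-- The image of the ball is cut out by the open half-planes bounded by its tangent lines.
lemma convex_image_ball_of_convexityRatio_re_pos (hg : DifferentiableOn ℂ g (ball 0 r))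
    (hne : ∀ z ∈ ball 0 r, deriv g z ≠ 0) (hpos : ∀ z ∈ ball 0 r, 0 < (convexityRatio g z).re)
    {ρ : ℝ} (hρ : 0 < ρ) (hρr : ρ < r) : Convex ℝ (g '' ball 0 ρ) := by
  set K : Set ℂ := ⋂ w ∈ sphere (0 : ℂ) ρ, {y | ⟪w * deriv g w, y⟫_ℝ < ⟪w * deriv g w, g w⟫_ℝ}
  have hsub : closedBall (0 : ℂ) ρ ⊆ ball 0 r := closedBall_subset_ball hρr
  have hKconvex : Convex ℝ K := convex_iInter₂ fun w _ =>
    convex_halfSpace_lt (innerSL ℝ (w * deriv g w)).toLinearMap.isLinear _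
  have himage : g '' ball 0 ρ ⊆ K := by
    refine image_subset_iff.2 fun z hz => mem_iInter₂.2 fun w hw => ?_
    rw [mem_ball_zero_iff] at hz
    rw [mem_sphere_zero_iff_norm] at hw
    have hneg := inner_mul_deriv_sub_neg_of_norm_le hg hne hpos
      (mem_ball_zero_iff.2 (hw.trans_lt hρr)) (hz.le.trans_eq hw.symm) fun h => by
        rw [h, hw] at hz
        exact hz.false
    rwa [inner_sub_right, sub_neg] at hneg
  have hclosure : closure (g '' ball 0 ρ) ∩ K ⊆ g '' ball 0 ρ := by
    have hcompact : IsCompact (g '' closedBall 0 ρ) :=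
      (isCompact_closedBall 0 ρ).image_of_continuousOn (hg.continuousOn.mono hsub)
    rintro y ⟨hy, hyK⟩
    obtain ⟨z, hz, rfl⟩ := closure_minimal (image_mono ball_subset_closedBall)
      hcompact.isClosed hy
    rcases (mem_closedBall.1 hz).lt_or_eq with hz | hz
    · exact mem_image_of_mem g hz
    · exact absurd (mem_ofPred.1 (mem_iInter₂.1 hyK z hz)) (lt_irrefl _)
  have hopen : IsOpen (g '' ball 0 ρ) :=
    isOpen_image_of_deriv_ne_zero isOpen_ball (hg.mono (ball_subset_closedBall.trans hsub))
      fun z hz => hne z (hsub (ball_subset_closedBall hz))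
  have hmem : g 0 ∈ g '' ball 0 ρ := mem_image_of_mem g (mem_ball_self hρ)
  rwa [himage.antisymm (hKconvex.isPreconnected.subset_of_closure_inter_subset hopen
    ⟨g 0, himage hmem, hmem⟩ hclosure)]

theorem convex_image_of_convexityRatio_re_pos (hg : DifferentiableOn ℂ g (ball 0 r))
    (hne : ∀ z ∈ ball 0 r, deriv g z ≠ 0) (hpos : ∀ z ∈ ball 0 r, 0 < (convexityRatio g z).re) :
    Convex ℝ (g '' ball 0 r) := by
  rw [convex_iff_segment_subset]
  rintro _ ⟨z, hz, rfl⟩ _ ⟨w, hw, rfl⟩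
  obtain ⟨ρ, hρ, hρr⟩ := exists_between (max_lt (mem_ball_zero_iff.1 hz) (mem_ball_zero_iff.1 hw))
  have hρ₀ : 0 < ρ := (norm_nonneg z).trans_lt ((le_max_left _ _).trans_lt hρ)
  have hzρ : z ∈ ball 0 ρ := mem_ball_zero_iff.2 ((le_max_left _ _).trans_lt hρ)
  have hwρ : w ∈ ball 0 ρ := mem_ball_zero_iff.2 ((le_max_right _ _).trans_lt hρ)
  exact ((convex_image_ball_of_convexityRatio_re_pos hg hne hpos hρ₀ hρr).segment_subset
    (mem_image_of_mem g hzρ) (mem_image_of_mem g hwρ)).trans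
    (image_mono (ball_subset_ball hρr.le))

-- Schwarz's lemma applied to `w ↦ g⁻¹ ((1 - s) g(w) + s g(c w))`, which fixes the origin.
lemma norm_invFunOn_lineMap_le (hg : DifferentiableOn ℂ g (ball 0 r)) (hinj : InjOn g (ball 0 r))
    (hconv : Convex ℝ (g '' ball 0 r)) {c : ℂ} (hc : ‖c‖ ≤ 1) {s : ℝ} (hs : s ∈ Icc (0 : ℝ) 1)
    (hz : z ∈ ball 0 r) :
    ‖Function.invFunOn g (ball 0 r) (AffineMap.lineMap (g z) (g (c * z)) s)‖ ≤ ‖z‖ := by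
  have hcmul : MapsTo (c * ·) (ball 0 r) (ball 0 r) := fun w hw => by
    rw [mem_ball_zero_iff] at hw ⊢
    calc ‖c * w‖ = ‖c‖ * ‖w‖ := norm_mul c w
      _ ≤ ‖w‖ := mul_le_of_le_one_left (norm_nonneg w) hc
      _ < r := hw
  have hline : MapsTo (fun w => AffineMap.lineMap (g w) (g (c * w)) s) (ball 0 r)
      (g '' ball 0 r) := fun w hw =>
    hconv.lineMap_mem (mem_image_of_mem g hw) (mem_image_of_mem g (hcmul hw)) hs
  have hline_diff : DifferentiableOn ℂ (fun w => AffineMap.lineMap (g w) (g (c * w)) s)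
      (ball 0 r) := by
    simp only [AffineMap.lineMap_apply_module]
    exact (hg.const_smul (1 - s)).add ((hg.comp (by fun_prop) hcmul).const_smul s)
  refine Complex.norm_le_norm_of_mapsTo_ball (E := ℂ) (F := ℂ)
    (f := fun w => Function.invFunOn g (ball 0 r) (AffineMap.lineMap (g w) (g (c * w)) s))
    ((differentiableOn_invFunOn isOpen_ball hg hinj).comp hline_diff hline)
    (fun w hw => ball_subset_closedBall (Function.invFunOn_mem (hline hw))) ?_
    (mem_ball_zero_iff.1 hz)
  rw [mul_zero, AffineMap.lineMap_same_apply]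
  exact hinj.leftInvOn_invFunOn (mem_ball_self (pos_of_mem_ball hz))

theorem inner_mul_deriv_sub_nonpos (hg : DifferentiableOn ℂ g (ball 0 r))
    (hinj : InjOn g (ball 0 r)) (hconv : Convex ℝ (g '' ball 0 r)) (hz₀ : z₀ ∈ ball 0 r)
    (hz : ‖z‖ ≤ ‖z₀‖) : ⟪z₀ * deriv g z₀, g z - g z₀⟫_ℝ ≤ 0 := by
  rcases eq_or_ne z₀ 0 with rfl | hz₀_ne
  · simp
  set k := Function.invFunOn g (ball 0 r)
  have hnhds : ball 0 r ∈ 𝓝 z₀ := isOpen_ball.mem_nhds hz₀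
  have hk : ∀ᶠ w in 𝓝 z₀, k (g w) = w :=
    mem_of_superset hnhds fun w hw => hinj.leftInvOn_invFunOn hw
  have hg' : deriv g z₀ ≠ 0 := deriv_ne_zero_of_injOn isOpen_ball hg hinj hz₀
  have hcurve : HasDerivAt (fun s : ℝ => k (AffineMap.lineMap (g z₀) (g z) s))
      ((deriv g z₀)⁻¹ * (g z - g z₀)) 0 := by
    have hline : HasDerivAt (fun s : ℝ => AffineMap.lineMap (g z₀) (g z) s) (g z - g z₀) 0 :=
      AffineMap.hasDerivAt_lineMap
    refine HasDerivAt.comp (h₂ := k) (0 : ℝ) ?_ hline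
    rw [AffineMap.lineMap_apply_zero]
    exact hasDerivAt_of_eventually_leftInverse_of_deriv_ne_zero (hg.analyticAt hnhds) hk hg'
  have hle : ∀ᶠ s : ℝ in 𝓝[>] 0, ‖k (AffineMap.lineMap (g z₀) (g z) s)‖ ≤ ‖z₀‖ := by
    filter_upwards [Ioc_mem_nhdsGT one_pos] with s hs
    have hratio : ‖z / z₀‖ ≤ 1 := by
      rw [norm_div]
      exact div_le_one_of_le₀ hz (norm_nonneg z₀)
    simpa only [div_mul_cancel₀ z hz₀_ne] using
      norm_invFunOn_lineMap_le hg hinj hconv hratio (Ioc_subset_Icc_self hs) hz₀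
  have hzero : k (AffineMap.lineMap (g z₀) (g z) (0 : ℝ)) = z₀ := by
    rw [AffineMap.lineMap_apply_zero, hk.self_of_nhds]
  have hinner := inner_nonpos_of_hasDerivAt_of_norm_le hcurve (by rwa [hzero])
  rw [hzero] at hinner
  calc ⟪z₀ * deriv g z₀, g z - g z₀⟫_ℝ
      = ⟪z₀ * deriv g z₀, (deriv g z₀)⁻¹ * (g z - g z₀) * deriv g z₀⟫_ℝ := by field_simp
    _ = ‖deriv g z₀‖ ^ 2 * ⟪z₀, (deriv g z₀)⁻¹ * (g z - g z₀)⟫_ℝ := real_inner_mul_mul_right _ _ _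
    _ ≤ 0 := mul_nonpos_of_nonneg_of_nonpos (by positivity) hinner

-- Adding the support inequalities of two points of a circle shows that the normal is a monotone
-- function of the boundary point; the ratio is the infinitesimal form of this.
theorem convexityRatio_re_nonneg (hg : DifferentiableOn ℂ g (ball 0 r))
    (hinj : InjOn g (ball 0 r)) (hconv : Convex ℝ (g '' ball 0 r)) (hz : z ∈ ball 0 r) :
    0 ≤ (convexityRatio g z).re := by
  rcases eq_or_ne z 0 with rfl | hz₀
  · simp [convexityRatio]
  have hg' : deriv g z ≠ 0 := deriv_ne_zero_of_injOn isOpen_ball hg hinj hz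
  have hgz : AnalyticAt ℂ g z := hg.analyticAt (isOpen_ball.mem_nhds hz)
  have hmem := circleMap_zero_mem_ball (norm_nonneg z) (mem_ball_zero_iff.1 hz)
  have hsupport : ∀ s t, ⟪circleMap 0 ‖z‖ s * deriv g (circleMap 0 ‖z‖ s),
      g (circleMap 0 ‖z‖ t) - g (circleMap 0 ‖z‖ s)⟫_ℝ ≤ 0 := fun s t =>
    inner_mul_deriv_sub_nonpos hg hinj hconv (hmem s) (by simp)
  have hnormal := hasDerivAt_comp_circleMap (R := ‖z‖) (t := z.arg) (q := fun w => w * deriv g w)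
    (by rw [circleMap_norm_arg]; exact hasDerivAt_mul_deriv hgz hg')
  have hcurve := hasDerivAt_comp_circleMap (R := ‖z‖) (t := z.arg)
    (by rw [circleMap_norm_arg]; exact hgz.differentiableAt.hasDerivAt)
  have hinner := inner_nonneg_of_hasDerivAt_of_inner_sub_nonneg hcurve hnormal fun t => by
    have hst := hsupport z.arg t
    have hts := hsupport t z.arg
    rw [real_inner_comm, inner_sub_left]
    rw [← neg_sub, inner_neg_right] at hts
    linarith
  rw [circleMap_norm_arg, ← mul_assoc z, ← mul_assoc Complex.I (z * _),
    real_inner_mul_self_right] at hinner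
  exact nonneg_of_mul_nonneg_right hinner (by
    have : Complex.I * (z * deriv g z) ≠ 0 := by simp [hz₀, hg']
    positivity)

theorem injOn_and_convex_image_iff_convexityRatio_re_pos (hg : DifferentiableOn ℂ g (ball 0 r)) :
    InjOn g (ball 0 r) ∧ Convex ℝ (g '' ball 0 r) ↔
      ∀ z ∈ ball 0 r, deriv g z ≠ 0 ∧ 0 < (convexityRatio g z).re := by
  constructor
  · rintro ⟨hinj, hconv⟩ z hz
    have hne : ∀ w ∈ ball 0 r, deriv g w ≠ 0 := fun w =>
      deriv_ne_zero_of_injOn isOpen_ball hg hinj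
    refine ⟨hne z hz, re_pos_of_re_nonneg_of_exists_re_pos isOpen_ball
      (convex_ball 0 r).isPreconnected (differentiableOn_convexityRatio isOpen_ball hg hne)
      (fun w => convexityRatio_re_nonneg hg hinj hconv) ⟨0, ?_, ?_⟩ z hz⟩
    · exact mem_ball_self (pos_of_mem_ball hz)
    · simp [convexityRatio]
  · intro h
    have hne := fun z hz => (h z hz).1
    have hpos := fun z hz => (h z hz).2
    exact ⟨injOn_of_convexityRatio_re_pos hg hne hpos,
      convex_image_of_convexityRatio_re_pos hg hne hpos⟩

end Study

section Slices

variable {X Y : Type*} [NormedAddCommGroup X] [NormedSpace ℂ X] [NormedAddCommGroup Y]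
  [NormedSpace ℂ Y] {F : X → Y} {h : ℂ → ℂ} {u : X} {v : Y} {ζ : ℂ}

lemma hasDerivAt_comp_smul_const (hF : DifferentiableAt ℂ F (ζ • u)) :
    HasDerivAt (fun t : ℂ => F (t • u)) (fderiv ℂ F (ζ • u) u) ζ := by
  have hline : HasDerivAt (fun t : ℂ => t • u) u ζ := by
    simpa using (hasDerivAt_id ζ).smul_const u
  exact hF.hasFDerivAt.comp_hasDerivAt ζ hline

lemma fderiv_apply_of_eventually_eq_smul (hF : DifferentiableAt ℂ F (ζ • u))
    (hh : DifferentiableAt ℂ h ζ) (heq : ∀ᶠ t in 𝓝 ζ, F (t • u) = h t • v) :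
    fderiv ℂ F (ζ • u) u = deriv h ζ • v :=
  (hasDerivAt_comp_smul_const hF).unique
    ((hh.hasDerivAt.smul_const v).congr_of_eventuallyEq heq)

lemma fderiv_fderiv_apply_of_eventually_eq_smul
    (hF : ∀ᶠ x in 𝓝 (ζ • u), DifferentiableAt ℂ F x)
    (hF' : DifferentiableAt ℂ (fderiv ℂ F) (ζ • u)) (hh : AnalyticAt ℂ h ζ)
    (heq : ∀ᶠ t in 𝓝 ζ, F (t • u) = h t • v) :
    fderiv ℂ (fderiv ℂ F) (ζ • u) u u = deriv (deriv h) ζ • v := by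
  have hcont : Tendsto (fun t : ℂ => t • u) (𝓝 ζ) (𝓝 (ζ • u)) :=
    (continuous_id.smul continuous_const).tendsto ζ
  have hfirst : ∀ᶠ t in 𝓝 ζ, fderiv ℂ F (t • u) u = deriv h t • v := by
    filter_upwards [hcont.eventually hF, hh.eventually_analyticAt, heq.eventually_nhds]
      with t ht hht heqt
    exact fderiv_apply_of_eventually_eq_smul ht hht.differentiableAt heqt
  have hleft := (hasDerivAt_comp_smul_const hF').clm_apply (hasDerivAt_const ζ u)
  rw [map_zero, add_zero] at hleft
  exact hleft.unique
    ((hh.deriv.differentiableAt.hasDerivAt.smul_const v).congr_of_eventuallyEq hfirst)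

end Slices

section QuasiConvex

variable {X : Type*} [NormedAddCommGroup X] [NormedSpace ℂ X]

/-- `F` satisfies at `x` the pointwise condition defining quasi-convex mappings of type `B`:
`DF(x)` is invertible and `Re l(DF(x)⁻¹(D²F(x)(x,x) + DF(x)x)) > 0` for all `l ∈ T(x)`. The inverse
is encoded as a continuous linear map `A` which is a two-sided inverse of `DF(x)`. -/
def IsQuasiConvexAt (F : X → X) (x : X) : Prop :=
  ∃ A : X →L[ℂ] X,
    A.comp (fderiv ℂ F x) = ContinuousLinearMap.id ℂ X ∧
    (fderiv ℂ F x).comp A = ContinuousLinearMap.id ℂ X ∧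
    ∀ l : X →L[ℂ] ℂ, l x = (‖x‖ : ℂ) → ‖l‖ = 1 →
      0 < (l (A (iteratedFDeriv ℂ 2 F x ![x, x] + fderiv ℂ F x x))).re

lemma isQuasiConvexAt_congr {F G : X → X} {x : X} (h : F =ᶠ[𝓝 x] G) :
    IsQuasiConvexAt F x ↔ IsQuasiConvexAt G x := by
  simp only [IsQuasiConvexAt, h.fderiv_eq, (h.iteratedFDeriv ℂ 2).eq_of_nhds]

theorem isQuasiConvexAt_iff_of_fderiv_apply_eq_smul {F : X → X} {x : X} {a b : ℂ} (hx : x ≠ 0)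
    (ha : fderiv ℂ F x x = a • x) (hb : iteratedFDeriv ℂ 2 F x ![x, x] = b • x) :
    IsQuasiConvexAt F x ↔ (fderiv ℂ F x).IsInvertible ∧ 0 < (1 + b / a).re := by
  have hinv : ∀ A : X →L[ℂ] X, A.comp (fderiv ℂ F x) = ContinuousLinearMap.id ℂ X →
      A (iteratedFDeriv ℂ 2 F x ![x, x] + fderiv ℂ F x x) = (1 + b / a) • x := fun A hA => by
    have hAx : a • A x = x := by
      simpa [ha] using DFunLike.congr_fun hA x
    have ha₀ : a ≠ 0 := by
      rintro rfl
      exact hx (by rw [← hAx, zero_smul])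
    rw [hb, ha, ← add_smul, map_smul, ← (inv_smul_eq_iff₀ ha₀).2 hAx.symm, smul_smul]
    congr 1
    field_simp
    ring
  have hl : ∀ l : X →L[ℂ] ℂ, l x = ‖x‖ → (l ((1 + b / a) • x)).re = ‖x‖ * (1 + b / a).re :=
    fun l hl => by rw [map_smul, hl, smul_eq_mul, mul_comm, Complex.re_ofReal_mul]
  have hx_pos : 0 < ‖x‖ := norm_pos_iff.2 hx
  constructor
  · rintro ⟨A, hAF, hFA, hpos⟩
    refine ⟨.of_inverse hFA hAF, ?_⟩
    obtain ⟨l, hl₁, hlx⟩ := exists_dual_vector ℂ x hx_pos.ne'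
    have hlpos := hpos l hlx hl₁
    rw [hinv A hAF, hl l hlx] at hlpos
    exact pos_of_mul_pos_right hlpos hx_pos.le
  · rintro ⟨hDF, hpos⟩
    refine ⟨(fderiv ℂ F x).inverse, hDF.inverse_comp_self, hDF.self_comp_inverse,
      fun l hlx _ => ?_⟩
    rw [hinv _ hDF.inverse_comp_self, hl l hlx]
    exact mul_pos hx_pos hpos

lemma isInvertible_smul_id_add_smulRight {l : X →L[ℂ] ℂ} {x : X} {c : ℂ} (hc : c ≠ 0)
    (hcl : c + l x ≠ 0) : (c • ContinuousLinearMap.id ℂ X + l.smulRight x).IsInvertible := by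
  refine .of_inverse (g := c⁻¹ • (ContinuousLinearMap.id ℂ X - (c + l x)⁻¹ • l.smulRight x))
    ?_ ?_ <;>
  · ext y
    simp only [ContinuousLinearMap.comp_apply, ContinuousLinearMap.smulRight_apply,
      ContinuousLinearMap.id_apply, add_apply, sub_apply, smul_apply, map_smul, map_add, map_sub]
    match_scalars <;> field_simp
    ring

variable {f : X → ℂ}

lemma hasFDerivAt_smul_id {x : X} (hf : DifferentiableAt ℂ f x) :
    HasFDerivAt (fun y => f y • y)
      (f x • ContinuousLinearMap.id ℂ X + (fderiv ℂ f x).smulRight x) x :=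
  hf.hasFDerivAt.smul (hasFDerivAt_id x)

lemma differentiableOn_fderiv_smul_id {U : Set X} (hU : IsOpen U) (hf : DifferentiableOn ℂ f U) :
    DifferentiableOn ℂ (fderiv ℂ fun y => f y • y) U := by
  refine DifferentiableOn.congr (f := fun y => f y • ContinuousLinearMap.id ℂ X +
    (fderiv ℂ f y).smulRight y) ?_ fun y hy =>
      (hasFDerivAt_smul_id (hf.differentiableAt (hU.mem_nhds hy))).fderiv
  exact (hf.smul_const _).add
    (((ContinuousLinearMap.smulRightL ℂ X X).differentiable.comp_differentiableOn
      (differentiableOn_fderiv hU hf)).clm_apply differentiableOn_id)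

/-- The function `f_u(ζ) = ζ f(ζu)` of one complex variable: the map `x ↦ f(x) x` restricted to the
complex line through `u`, in the coordinate `ζ ↦ ζu`. -/
def radialSlice (f : X → ℂ) (u : X) (ζ : ℂ) : ℂ :=
  ζ * f (ζ • u)

variable {u : X} {r : ℝ} {ζ : ℂ}

lemma smul_smul_eq_radialSlice_smul (f : X → ℂ) (u : X) (ζ : ℂ) :
    f (ζ • u) • ζ • u = radialSlice f u ζ • u := by
  rw [radialSlice, smul_smul, mul_comm]

lemma smul_mem_ball_of_norm_eq_one (hu : ‖u‖ = 1) (hζ : ζ ∈ ball 0 r) : ζ • u ∈ ball 0 r := by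
  rw [mem_ball_zero_iff] at hζ ⊢
  rwa [norm_smul, hu, mul_one]

lemma differentiableOn_radialSlice (hf : DifferentiableOn ℂ f (ball 0 r)) (hu : ‖u‖ = 1) :
    DifferentiableOn ℂ (radialSlice f u) (ball 0 r) :=
  differentiableOn_id.mul
    (hf.comp (by fun_prop) fun _ hζ => smul_mem_ball_of_norm_eq_one hu hζ)

lemma fderiv_smul_id_apply_self (hf : DifferentiableOn ℂ f (ball 0 r)) (hu : ‖u‖ = 1)
    (hζ : ζ ∈ ball 0 r) :
    fderiv ℂ (fun y => f y • y) (ζ • u) (ζ • u) = deriv (radialSlice f u) ζ • ζ • u := by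
  have hfx := hf.differentiableAt (isOpen_ball.mem_nhds (smul_mem_ball_of_norm_eq_one hu hζ))
  rw [map_smul, fderiv_apply_of_eventually_eq_smul (hasFDerivAt_smul_id hfx).differentiableAt
    ((differentiableOn_radialSlice hf hu).differentiableAt (isOpen_ball.mem_nhds hζ))
    (.of_forall (smul_smul_eq_radialSlice_smul f u)), smul_comm]

lemma iteratedFDeriv_two_smul_id_apply_self (hf : DifferentiableOn ℂ f (ball 0 r))
    (hu : ‖u‖ = 1) (hζ : ζ ∈ ball 0 r) :
    iteratedFDeriv ℂ 2 (fun y => f y • y) (ζ • u) ![ζ • u, ζ • u] =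
      (ζ * deriv (deriv (radialSlice f u)) ζ) • ζ • u := by
  have hx := isOpen_ball.mem_nhds (smul_mem_ball_of_norm_eq_one hu hζ)
  have hF : ∀ᶠ x in 𝓝 (ζ • u), DifferentiableAt ℂ (fun y => f y • y) x := by
    filter_upwards [hf.eventually_differentiableAt hx] with x hfx
    exact (hasFDerivAt_smul_id hfx).differentiableAt
  have hF' := (differentiableOn_fderiv_smul_id isOpen_ball hf).differentiableAt hx
  have hh := (differentiableOn_radialSlice hf hu).analyticAt (isOpen_ball.mem_nhds hζ)
  rw [iteratedFDeriv_two_apply]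
  simp only [Matrix.cons_val_zero, Matrix.cons_val_one, map_smul, smul_apply]
  rw [fderiv_fderiv_apply_of_eventually_eq_smul hF hF' hh
    (.of_forall (smul_smul_eq_radialSlice_smul f u))]
  module

lemma add_fderiv_apply_eq_deriv_radialSlice (hf : DifferentiableOn ℂ f (ball 0 r))
    (hu : ‖u‖ = 1) (hζ : ζ ∈ ball 0 r) :
    f (ζ • u) + fderiv ℂ f (ζ • u) (ζ • u) = deriv (radialSlice f u) ζ := by
  have hline := hasDerivAt_comp_smul_const
    (hf.differentiableAt (isOpen_ball.mem_nhds (smul_mem_ball_of_norm_eq_one hu hζ)))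
  have hprod : HasDerivAt (radialSlice f u) (1 * f (ζ • u) + ζ * fderiv ℂ f (ζ • u) u) ζ :=
    (hasDerivAt_id ζ).mul hline
  rw [hprod.deriv, one_mul, map_smul, smul_eq_mul]

lemma deriv_radialSlice_zero (hf : DifferentiableOn ℂ f (ball 0 r)) (hr : 0 < r) (hu : ‖u‖ = 1) :
    deriv (radialSlice f u) 0 = f 0 := by
  rw [← add_fderiv_apply_eq_deriv_radialSlice hf hu (mem_ball_self hr), zero_smul, map_zero,
    add_zero]

lemma isQuasiConvexAt_smul_id_iff (hf : DifferentiableOn ℂ f (ball 0 r)) (hu : ‖u‖ = 1)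
    (hζ : ζ ∈ ball 0 r) (hζ₀ : ζ ≠ 0) :
    IsQuasiConvexAt (fun y => f y • y) (ζ • u) ↔
      (fderiv ℂ (fun y => f y • y) (ζ • u)).IsInvertible ∧
        0 < (convexityRatio (radialSlice f u) ζ).re :=
  isQuasiConvexAt_iff_of_fderiv_apply_eq_smul
    (smul_ne_zero hζ₀ (norm_ne_zero_iff.1 (hu ▸ one_ne_zero)))
    (fderiv_smul_id_apply_self hf hu hζ) (iteratedFDeriv_two_smul_id_apply_self hf hu hζ)

lemma deriv_radialSlice_ne_zero_of_isInvertible_fderiv (hf : DifferentiableOn ℂ f (ball 0 r))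
    (hu : ‖u‖ = 1) (hζ : ζ ∈ ball 0 r) (hζ₀ : ζ ≠ 0)
    (h : (fderiv ℂ (fun y => f y • y) (ζ • u)).IsInvertible) :
    deriv (radialSlice f u) ζ ≠ 0 := fun hzero => by
  have hx : ζ • u ≠ 0 := smul_ne_zero hζ₀ (norm_ne_zero_iff.1 (hu ▸ one_ne_zero))
  refine hx (h.injective ?_)
  rw [fderiv_smul_id_apply_self hf hu hζ, hzero, zero_smul, map_zero]

lemma isInvertible_fderiv_smul_id (hf : DifferentiableOn ℂ f (ball 0 r)) (hu : ‖u‖ = 1)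
    (hζ : ζ ∈ ball 0 r) (hfζ : f (ζ • u) ≠ 0) (hderiv : deriv (radialSlice f u) ζ ≠ 0) :
    (fderiv ℂ (fun y => f y • y) (ζ • u)).IsInvertible := by
  rw [(hasFDerivAt_smul_id (hf.differentiableAt
    (isOpen_ball.mem_nhds (smul_mem_ball_of_norm_eq_one hu hζ)))).fderiv]
  refine isInvertible_smul_id_add_smulRight hfζ ?_
  rwa [add_fderiv_apply_eq_deriv_radialSlice hf hu hζ]

lemma apply_smul_ne_zero_of_injOn_radialSlice (hinj : InjOn (radialSlice f u) (ball 0 r))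
    (hζ : ζ ∈ ball 0 r) (hζ₀ : ζ ≠ 0) : f (ζ • u) ≠ 0 := fun hzero =>
  hζ₀ (hinj hζ (mem_ball_self (pos_of_mem_ball hζ)) (by simp [radialSlice, hzero]))

theorem isQuasiConvexAt_slice_iff (hf : DifferentiableOn ℂ f (ball 0 r)) (hf₀ : f 0 ≠ 0)
    (hu : ‖u‖ = 1) :
    (∀ ζ ∈ ball (0 : ℂ) r, ζ ≠ 0 → IsQuasiConvexAt (fun y => f y • y) (ζ • u)) ↔
      InjOn (radialSlice f u) (ball 0 r) ∧ Convex ℝ (radialSlice f u '' ball 0 r) := by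
  have hstudy :=
    injOn_and_convex_image_iff_convexityRatio_re_pos (differentiableOn_radialSlice hf hu)
  constructor
  · refine fun h => hstudy.2 fun ζ hζ => ?_
    rcases eq_or_ne ζ 0 with rfl | hζ₀
    · rw [deriv_radialSlice_zero hf (pos_of_mem_ball hζ) hu]
      exact ⟨hf₀, by simp [convexityRatio]⟩
    · obtain ⟨hinv, hpos⟩ := (isQuasiConvexAt_smul_id_iff hf hu hζ hζ₀).1 (h ζ hζ hζ₀)
      exact ⟨deriv_radialSlice_ne_zero_of_isInvertible_fderiv hf hu hζ hζ₀ hinv, hpos⟩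
  · intro h ζ hζ hζ₀
    obtain ⟨hderiv, hpos⟩ := hstudy.1 h ζ hζ
    exact (isQuasiConvexAt_smul_id_iff hf hu hζ hζ₀).2
      ⟨isInvertible_fderiv_smul_id hf hu hζ
        (apply_smul_ne_zero_of_injOn_radialSlice h.1 hζ hζ₀) hderiv, hpos⟩

lemma forall_mem_ball_ne_zero_iff_forall_norm_eq_one {p : X → Prop} :
    (∀ x ∈ ball (0 : X) r, x ≠ 0 → p x) ↔
      ∀ u : X, ‖u‖ = 1 → ∀ ζ ∈ ball (0 : ℂ) r, ζ ≠ 0 → p (ζ • u) := by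
  constructor
  · exact fun h u hu ζ hζ hζ₀ => h _ (smul_mem_ball_of_norm_eq_one hu hζ)
      (smul_ne_zero hζ₀ (norm_ne_zero_iff.1 (hu ▸ one_ne_zero)))
  · intro h x hx hx₀
    have hnorm : (‖x‖ : ℂ) ≠ 0 := Complex.ofReal_ne_zero.2 (norm_ne_zero_iff.2 hx₀)
    have hx_eq : (‖x‖ : ℂ) • (‖x‖ : ℂ)⁻¹ • x = x := smul_inv_smul₀ hnorm x
    rw [← hx_eq]
    exact h _ (norm_smul_inv_norm hx₀) _ (by simpa using hx) hnorm

theorem stmt2_general (hf : DifferentiableOn ℂ f (ball 0 r)) (hf₀ : f 0 ≠ 0) {F : X → X}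
    (hF : ∀ x ∈ ball (0 : X) r, F x = f x • x) :
    (∀ x ∈ ball (0 : X) r, x ≠ 0 → IsQuasiConvexAt F x) ↔
      ∀ u : X, ‖u‖ = 1 →
        DifferentiableOn ℂ (radialSlice f u) (ball 0 r) ∧
        InjOn (radialSlice f u) (ball 0 r) ∧
        Convex ℝ (radialSlice f u '' ball 0 r) := by
  have hcongr : ∀ x ∈ ball (0 : X) r,
      (IsQuasiConvexAt F x ↔ IsQuasiConvexAt (fun y => f y • y) x) := fun x hx =>
    isQuasiConvexAt_congr (mem_of_superset (isOpen_ball.mem_nhds hx) hF)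
  calc (∀ x ∈ ball (0 : X) r, x ≠ 0 → IsQuasiConvexAt F x)
      ↔ ∀ x ∈ ball (0 : X) r, x ≠ 0 → IsQuasiConvexAt (fun y => f y • y) x :=
        forall₂_congr fun x hx => imp_congr_right fun _ => hcongr x hx
    _ ↔ ∀ u : X, ‖u‖ = 1 → ∀ ζ ∈ ball (0 : ℂ) r, ζ ≠ 0 →
          IsQuasiConvexAt (fun y => f y • y) (ζ • u) :=
        forall_mem_ball_ne_zero_iff_forall_norm_eq_one
    _ ↔ _ := forall₂_congr fun u hu => (isQuasiConvexAt_slice_iff hf hf₀ hu).trans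
        (and_iff_right (differentiableOn_radialSlice hf hu)).symm

end QuasiConvex

/-- **Quasi-convexity criterion.** Let `F(x) = f(x)·x` on the unit ball `𝔹` of a complex
Banach space `X`, with `f` holomorphic on `𝔹`, `f(0) = 1`, and let `0 < r ≤ 1`. Then the
following are equivalent:
(a) for every `x ∈ B_r \ {0}`, the Fréchet derivative `DF(x)` is invertible and
`Re l_x([DF(x)]⁻¹(D²F(x)(x,x) + DF(x)x)) > 0` for every `l_x ∈ T(x)`
(`F` is quasi-convex of type `B` on `B_r`);
(b) for every `u` with `‖u‖ = 1`, the function `f_u(ζ) = ζ·f(ζu)` is convex on `𝕌_r`,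
i.e. injective holomorphic with convex image. -/
theorem stmt2 {X : Type*} [NormedAddCommGroup X] [NormedSpace ℂ X] [CompleteSpace X]
    (r : ℝ) (hr : r ∈ Set.Ioc (0 : ℝ) 1)
    (f : X → ℂ) (hf : DifferentiableOn ℂ f (ball (0 : X) 1)) (hf0 : f 0 = 1)
    (F : X → X) (hF : ∀ x ∈ ball (0 : X) 1, F x = f x • x) :
    (∀ x ∈ ball (0 : X) r, x ≠ 0 →
        ∃ A : X →L[ℂ] X,
          A.comp (fderiv ℂ F x) = ContinuousLinearMap.id ℂ X ∧
          (fderiv ℂ F x).comp A = ContinuousLinearMap.id ℂ X ∧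
          ∀ l : X →L[ℂ] ℂ, l x = (‖x‖ : ℂ) → ‖l‖ = 1 →
            0 < (l (A (iteratedFDeriv ℂ 2 F x ![x, x] + fderiv ℂ F x x))).re)
      ↔
    (∀ u : X, ‖u‖ = 1 →
        DifferentiableOn ℂ (fun ζ : ℂ => ζ * f (ζ • u)) (ball (0 : ℂ) r) ∧
        Set.InjOn (fun ζ : ℂ => ζ * f (ζ • u)) (ball (0 : ℂ) r) ∧
        Convex ℝ ((fun ζ : ℂ => ζ * f (ζ • u)) '' ball (0 : ℂ) r)) := by
  exact stmt2_general (hf.mono (ball_subset_ball hr.2)) (hf0 ▸ one_ne_zero)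
    fun x hx => hF x (ball_subset_ball hr.2 hx)
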